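/- arXiv:0811.2284 — 6 statements merged into one kernel-verified Lean document; each statement's English description precedes it below -/
import Mathlib

section
/- Let (Ω, Σ, μ) be a finite measure space, X and Y Banach spaces, and let Φ: Ω → L(X,Y) be strongly μ-measurable (as a function with values in the Banach space L(X,Y) with the operator norm). Then for every ε > 0 there exists a strongly μ-measurable function f: Ω → X such that for μ-almost all ω ∈ Ω one has ‖f(ω)‖ ≤ 1 and ‖Φ(ω)‖ ≤ ‖Φ(ω)f(ω)‖ + ε. -/
open MeasureTheory

/-- Proposition 1.1 of Blasco–van Neerven.
If `Φ : Ω → L(X,Y)` is strongly `μ`-measurable (with respect to the operator norm),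
then for every `ε > 0` there is a strongly `μ`-measurable `f : Ω → X` with
`‖f ω‖ ≤ 1` and `‖Φ ω‖ ≤ ‖Φ ω (f ω)‖ + ε` for `μ`-almost all `ω`. -/
theorem strongly_measurable_operator_valued_normable
    {Ω : Type*} [MeasurableSpace Ω] {𝕜 X Y : Type*} [RCLike 𝕜]
    [NormedAddCommGroup X] [NormedSpace 𝕜 X] [CompleteSpace X]
    [NormedAddCommGroup Y] [NormedSpace 𝕜 Y] [CompleteSpace Y]
    (μ : Measure Ω) [IsFiniteMeasure μ]
    (Φ : Ω → X →L[𝕜] Y) (hΦ : AEStronglyMeasurable Φ μ) :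
    ∀ ε : ℝ, 0 < ε → ∃ f : Ω → X, AEStronglyMeasurable f μ ∧
      ∀ᵐ ω ∂μ, ‖f ω‖ ≤ 1 ∧ ‖Φ ω‖ ≤ ‖Φ ω (f ω)‖ + ε := by
  classical
  intro ε hε
  obtain ⟨G, hG, hGΦ⟩ := hΦ
  obtain ⟨c, hc, hcG⟩ := hG.isSeparable_range
  obtain ⟨s, hs⟩ := (hc.insert (0 : X →L[𝕜] Y)).exists_eq_range (Set.insert_nonempty _ _)
  have hx : ∀ n, ∃ x : X, ‖x‖ < 1 ∧ ‖s n‖ - ε / 3 < ‖s n x‖ := fun n =>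
    ContinuousLinearMap.exists_lt_apply_of_lt_opNorm (s n) (by linarith)
  choose x hx1 hx2 using hx
  have hN : ∀ ω, ∃ n, dist (G ω) (s n) < ε / 3 := by
    intro ω
    obtain ⟨b, hb, hd⟩ := Metric.mem_closure_iff.1 (hcG (Set.mem_range_self ω)) (ε / 3)
      (by linarith)
    have hb' : b ∈ Set.range s := hs ▸ Set.mem_insert_of_mem _ hb
    obtain ⟨n, rfl⟩ := hb'
    exact ⟨n, hd⟩
  have hmeas : Measurable fun ω => Nat.find (hN ω) := by
    refine measurable_find hN fun n => ?_
    exact measurableSet_lt (hG.dist stronglyMeasurable_const).measurable measurable_const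
  refine ⟨fun ω => x (Nat.find (hN ω)), ?_, ?_⟩
  · have hxm : StronglyMeasurable x := StronglyMeasurable.of_discrete
    exact (hxm.comp_measurable hmeas).aestronglyMeasurable
  · filter_upwards [hGΦ] with ω hω
    rw [hω]
    have hd := Nat.find_spec (hN ω)
    generalize Nat.find (hN ω) = n at hd ⊢
    refine ⟨(hx1 n).le, ?_⟩
    rw [dist_eq_norm] at hd
    have h1 : ‖G ω‖ ≤ ‖s n‖ + ‖G ω - s n‖ := norm_le_norm_add_norm_sub' _ _
    have h2 : ‖s n (x n)‖ ≤ ‖G ω (x n)‖ + ‖G ω (x n) - s n (x n)‖ := norm_le_norm_add_norm_sub _ _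
    have h3 : ‖G ω (x n) - s n (x n)‖ ≤ ‖G ω - s n‖ := by
      have := (G ω - s n).le_opNorm_of_le (hx1 n).le
      simpa using this
    have := hx2 n
    linarith
end

section
/- Let (Ω, Σ, μ) be a finite measure space, X a separable Banach space, Y a Banach space, and Φ: Ω → L(X,Y) a function such that ω ↦ ‖Φ(ω)x‖ is μ-measurable for every x ∈ X. Then Φ is strongly μ-normable: for every ε > 0 there exists a strongly μ-measurable f: Ω → X such that for μ-almost all ω ∈ Ω one has ‖f(ω)‖ ≤ 1 and ‖Φ(ω)‖ ≤ ‖Φ(ω)f(ω)‖ + ε. -/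
open MeasureTheory

/-- Corollary 2.3(1) of Blasco–van Neerven.
If `X` is a separable Banach space and `ω ↦ ‖Φ ω x‖` is `μ`-measurable for every
`x ∈ X`, then `Φ` is strongly `μ`-normable. -/
theorem separable_strongly_normable
    {Ω : Type*} [MeasurableSpace Ω] {𝕜 X Y : Type*} [RCLike 𝕜]
    [NormedAddCommGroup X] [NormedSpace 𝕜 X] [CompleteSpace X]
    [TopologicalSpace.SeparableSpace X]
    [NormedAddCommGroup Y] [NormedSpace 𝕜 Y] [CompleteSpace Y]
    (μ : Measure Ω) [IsFiniteMeasure μ]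
    (Φ : Ω → X →L[𝕜] Y)
    (hmeas : ∀ x : X, AEMeasurable (fun ω => ‖Φ ω x‖) μ) :
    ∀ ε : ℝ, 0 < ε → ∃ f : Ω → X, AEStronglyMeasurable f μ ∧
      ∀ᵐ ω ∂μ, ‖f ω‖ ≤ 1 ∧ ‖Φ ω‖ ≤ ‖Φ ω (f ω)‖ + ε := by
  classical
  intro ε hε
  let B := Metric.closedBall (0 : X) 1
  have : SecondCountableTopology X := UniformSpace.secondCountable_of_separable X
  have : Nonempty B := ⟨⟨0, by simp [B]⟩⟩
  let u : ℕ → B := TopologicalSpace.denseSeq B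
  have hu : DenseRange u := TopologicalSpace.denseRange_denseSeq B
  have hu1 : ∀ n, ‖(u n : X)‖ ≤ 1 := fun n => mem_closedBall_zero_iff.1 (u n).2
  let g : ℕ → Ω → ℝ := fun n => (hmeas (u n)).mk _
  have hg : ∀ n, Measurable (g n) := fun n => (hmeas (u n)).measurable_mk
  have hge : ∀ᵐ ω ∂μ, ∀ n, ‖Φ ω (u n)‖ = g n ω :=
    ae_all_iff.2 fun n => (hmeas (u n)).ae_eq_mk
  let q : Ω → ℕ → Prop := fun ω n => ∀ m, g m ω ≤ g n ω + ε
  have hq : ∀ n, MeasurableSet {ω | q ω n} := fun n => by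
    have : {ω | q ω n} = ⋂ m, {ω | g m ω ≤ g n ω + ε} := by
      ext ω; simp [q]
    rw [this]
    exact MeasurableSet.iInter fun m => measurableSet_le (hg m) ((hg n).add_const ε)
  let p : Ω → ℕ → Prop := fun ω n => q ω n ∨ ∀ k, ¬ q ω k
  have hp : ∀ ω, ∃ n, p ω n := fun ω => by
    by_cases h : ∃ n, q ω n
    · obtain ⟨n, hn⟩ := h
      exact ⟨n, Or.inl hn⟩
    · exact ⟨0, Or.inr (not_exists.1 h)⟩
  have hpm : ∀ n, MeasurableSet {ω | p ω n} := fun n => by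
    have : {ω | p ω n} = {ω | q ω n} ∪ ⋂ k, {ω | q ω k}ᶜ := by
      ext ω; simp [p]
    rw [this]
    exact (hq n).union (MeasurableSet.iInter fun k => (hq k).compl)
  have hN : Measurable fun ω => Nat.find (hp ω) := measurable_find hp hpm
  refine ⟨fun ω => (u (Nat.find (hp ω)) : X), ?_, ?_⟩
  · have h1 : StronglyMeasurable fun n : ℕ => (u n : X) := StronglyMeasurable.of_discrete
    exact (h1.comp_measurable hN).aestronglyMeasurable
  · filter_upwards [hge] with ω hω
    refine ⟨hu1 _, ?_⟩
    have hbdd : BddAbove (Set.range fun n => g n ω) := by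
      refine ⟨‖Φ ω‖, ?_⟩
      rintro _ ⟨n, rfl⟩
      simp only [← hω]
      exact (Φ ω).unit_le_opNorm _ (hu1 n)
    have hex : ∃ n, q ω n := by
      obtain ⟨n, hn⟩ := exists_lt_of_lt_ciSup (sub_lt_self (⨆ n, g n ω) hε)
      exact ⟨n, fun m => by linarith [le_ciSup hbdd m]⟩
    have hfind : q ω (Nat.find (hp ω)) := by
      rcases Nat.find_spec (hp ω) with h | h
      · exact h
      · exact absurd hex (not_exists.2 h)
    have hall : ∀ x : B, ‖Φ ω x‖ ≤ ‖Φ ω (u (Nat.find (hp ω)))‖ + ε := by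
      intro x
      refine hu.induction_on (p := fun x : B => ‖Φ ω x‖ ≤ ‖Φ ω (u (Nat.find (hp ω)))‖ + ε) x ?_ ?_
      · exact isClosed_le (by fun_prop) continuous_const
      · intro m
        rw [hω, hω]
        exact hfind m
    rw [← (Φ ω).sSup_unitClosedBall_eq_norm]
    refine csSup_le ((Metric.nonempty_closedBall.2 zero_le_one).image _) ?_
    rintro _ ⟨x, hx, rfl⟩
    exact hall ⟨x, hx⟩
end

section
/- Let Ω be a topological space equipped with its Borel σ-algebra and let μ be a finite Borel measure on Ω that is inner regular with respect to compact sets (a finite Radon measure). Let S be a nonempty set and Φ: Ω → (S → ℝ) a function such that each Φ(ω) is bounded from above and such that for every s ∈ S the function ω ↦ (Φ(ω))(s) is lower semicontinuous. Then for every ε > 0 there exist pairwise disjoint Borel sets A_n ⊆ Ω (n ≥ 1) with ⋃_{n≥1} A_n = Ω and elements s_n ∈ S such that for μ-almost all ω ∈ Ω, if ω ∈ A_n then sup_{s∈S} (Φ(ω))(s) ≤ (Φ(ω))(s_n) + ε. -/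
open MeasureTheory

theorem aux_countable_cover {Ω : Type*} [TopologicalSpace Ω] [MeasurableSpace Ω] [BorelSpace Ω]
    {S : Type*} (μ : Measure Ω) [IsFiniteMeasure μ] [μ.InnerRegular]
    (V : S → Set Ω) (hV : ∀ s, IsOpen (V s)) :
    ∃ T : Set S, T.Countable ∧ μ ((⋃ s, V s) \ ⋃ s ∈ T, V s) = 0 := by
  have hU : IsOpen (⋃ s, V s) := isOpen_iUnion hV
  have h1 : ∀ n : ℕ, ∃ K, K ⊆ (⋃ s, V s) ∧ IsCompact K ∧
      μ (⋃ s, V s) < μ K + ((n : ENNReal) + 1)⁻¹ := fun n =>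
    hU.measurableSet.exists_isCompact_lt_add (measure_ne_top _ _) (by simp)
  choose K hKU hK hlt using h1
  have h2 : ∀ n, ∃ t : Finset S, K n ⊆ ⋃ s ∈ t, V s := fun n =>
    (hK n).elim_finite_subcover V hV (hKU n)
  choose t ht using h2
  refine ⟨⋃ n, (t n : Set S), Set.countable_iUnion fun n => (t n).countable_toSet, ?_⟩
  have hW : IsOpen (⋃ s ∈ ⋃ n, (t n : Set S), V s) := isOpen_biUnion fun s _ => hV s
  have hle : μ (⋃ s, V s) ≤ μ (⋃ s ∈ ⋃ n, (t n : Set S), V s) := by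
    have hlim : Filter.Tendsto (fun n : ℕ => μ (⋃ s ∈ ⋃ n, (t n : Set S), V s)
        + ((n : ENNReal) + 1)⁻¹) Filter.atTop
        (nhds (μ (⋃ s ∈ ⋃ n, (t n : Set S), V s) + 0)) := by
      refine Filter.Tendsto.add tendsto_const_nhds ?_
      have := (Filter.tendsto_add_atTop_iff_nat 1).2 ENNReal.tendsto_inv_nat_nhds_zero
      simpa using this
    rw [add_zero] at hlim
    refine ge_of_tendsto' hlim fun n => (hlt n).le.trans ?_
    gcongr
    refine (ht n).trans ?_
    intro x hx
    simp only [Set.mem_iUnion] at hx ⊢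
    obtain ⟨s, hs, hx⟩ := hx
    exact ⟨s, ⟨n, hs⟩, hx⟩
  rw [measure_sdiff (Set.iUnion₂_subset fun s _ => Set.subset_iUnion V s)
    hW.measurableSet.nullMeasurableSet (measure_ne_top _ _)]
  exact tsub_eq_zero_of_le hle

/-- Proposition 2.5 of Blasco–van Neerven.
Let `μ` be a finite Radon measure (finite Borel measure, inner regular with respect
to compact sets) on a topological space `Ω`, and let `Φ : Ω → (S → ℝ)` take values in
the functions bounded from above, with each evaluation `ω ↦ Φ ω s` lower
semicontinuous. Then for every `ε > 0` there is a countable Borel partition `(A n)`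
of `Ω` and elements `s n ∈ S` such that for `μ`-almost all `ω`, if `ω ∈ A n` then
`⨆ t, Φ ω t ≤ Φ ω (s n) + ε`. -/
theorem radon_lsc_elementary_normable
    {Ω : Type*} [TopologicalSpace Ω] [MeasurableSpace Ω] [BorelSpace Ω]
    {S : Type*} [Nonempty S]
    (μ : Measure Ω) [IsFiniteMeasure μ] [μ.InnerRegular]
    (Φ : Ω → S → ℝ)
    (hbdd : ∀ ω, BddAbove (Set.range (Φ ω)))
    (hlsc : ∀ s : S, LowerSemicontinuous (fun ω => Φ ω s))
    (ε : ℝ) (hε : 0 < ε) :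
    ∃ (A : ℕ → Set Ω) (s : ℕ → S),
      (∀ n, MeasurableSet (A n)) ∧
      Pairwise (Function.onFun Disjoint A) ∧
      (⋃ n, A n) = Set.univ ∧
      ∀ᵐ ω ∂μ, ∀ n, ω ∈ A n → (⨆ t : S, Φ ω t) ≤ Φ ω (s n) + ε := by
  have h1 : ∀ q : ℚ, ∃ T : Set S, T.Countable ∧
      μ ((⋃ s, {ω | (q : ℝ) < Φ ω s}) \ ⋃ s ∈ T, {ω | (q : ℝ) < Φ ω s}) = 0 := fun q =>
    aux_countable_cover μ _ fun s => (hlsc s).isOpen_preimage q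
  choose T hT h0 using h1
  obtain ⟨s0⟩ := ‹Nonempty S›
  haveI : Nonempty S := ⟨s0⟩
  obtain ⟨s, hs⟩ := ((Set.countable_iUnion hT).insert s0).exists_eq_range (Set.insert_nonempty _ _)
  have hsup : LowerSemicontinuous (fun ω => ⨆ t : S, Φ ω t) :=
    lowerSemicontinuous_ciSup hbdd hlsc
  set C : ℕ → Set Ω := fun n => {ω | (⨆ t : S, Φ ω t) ≤ Φ ω (s n) + ε} with hC
  have hCm : ∀ n, MeasurableSet (C n) := fun n =>
    measurableSet_le hsup.measurable ((hlsc (s n)).measurable.add_const ε)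
  have hae : ∀ᵐ ω ∂μ, ω ∈ ⋃ n, C n := by
    have : ∀ᵐ ω ∂μ, ∀ q : ℚ,
        ω ∉ (⋃ s, {ω | (q : ℝ) < Φ ω s}) \ ⋃ s ∈ T q, {ω | (q : ℝ) < Φ ω s} :=
      ae_all_iff.2 fun q => measure_eq_zero_iff_ae_notMem.1 (h0 q)
    filter_upwards [this] with ω hω
    obtain ⟨q, hq1, hq2⟩ := exists_rat_btwn (sub_lt_self (⨆ t : S, Φ ω t) hε)
    obtain ⟨t, ht⟩ := exists_lt_of_lt_ciSup hq2
    have h3 : ω ∈ ⋃ s ∈ T q, {ω | (q : ℝ) < Φ ω s} := by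
      by_contra hn
      exact hω q ⟨Set.mem_iUnion.2 ⟨t, ht⟩, hn⟩
    simp only [Set.mem_iUnion, Set.mem_setOf_eq, exists_prop] at h3
    obtain ⟨u, hu, hlt⟩ := h3
    have : u ∈ Set.range s := hs ▸ Set.mem_insert_of_mem _ (Set.mem_iUnion.2 ⟨q, hu⟩)
    obtain ⟨n, rfl⟩ := this
    refine Set.mem_iUnion.2 ⟨n, ?_⟩
    simp only [hC, Set.mem_setOf_eq]
    linarith
  refine ⟨disjointed fun n => C n ∪ (⋃ n, C n)ᶜ, s, fun n => ?_, disjoint_disjointed _, ?_, ?_⟩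
  · exact MeasurableSet.disjointed
      (fun n => (hCm n).union (MeasurableSet.iUnion hCm).compl) n
  · rw [iUnion_disjointed, ← Set.iUnion_union, Set.union_compl_self]
  · filter_upwards [hae] with ω hω n hn
    rcases disjointed_subset _ n hn with h | h
    · exact h
    · exact absurd hω h
end

section
/- Let Ω be a topological space equipped with its Borel σ-algebra and let μ be a finite Borel measure on Ω that is inner regular with respect to compact sets. Let X and Y be Banach spaces and Φ: Ω → L(X,Y) a function such that ω ↦ ‖Φ(ω)x‖ is lower semicontinuous for every x ∈ X. Then Φ is strongly μ-normable: for every ε > 0 there exists a strongly μ-measurable f: Ω → X such that for μ-almost all ω ∈ Ω one has ‖f(ω)‖ ≤ 1 and ‖Φ(ω)‖ ≤ ‖Φ(ω)f(ω)‖ + ε. -/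
open MeasureTheory

lemma aux_countable_cover_s5 {Ω : Type*} [TopologicalSpace Ω] [MeasurableSpace Ω] [BorelSpace Ω]
    (μ : Measure Ω) [IsFiniteMeasure μ] [μ.InnerRegular] {ι : Type*} (U : ι → Set Ω)
    (hU : ∀ i, IsOpen (U i)) :
    ∃ C : Set ι, C.Countable ∧ ∀ᵐ ω ∂μ, (∃ i, ω ∈ U i) → ∃ i ∈ C, ω ∈ U i := by
  have hO : IsOpen (⋃ i, U i) := isOpen_iUnion hU
  have key : ∀ n : ℕ, ∃ t : Finset ι,
      μ (⋃ i, U i) ≤ μ (⋃ i ∈ t, U i) + ((n : ENNReal) + 1)⁻¹ := by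
    intro n
    obtain ⟨K, hKU, hK, hlt⟩ := hO.measurableSet.exists_isCompact_lt_add (μ := μ)
      (measure_ne_top μ _) (ε := ((n : ENNReal) + 1)⁻¹) (by simp)
    obtain ⟨t, ht⟩ := hK.elim_finite_subcover U hU hKU
    exact ⟨t, hlt.le.trans (by gcongr)⟩
  choose t ht using key
  refine ⟨⋃ n, (t n : Set ι), Set.countable_iUnion fun n => (t n).countable_toSet, ?_⟩
  set V := ⋃ i ∈ ⋃ n, (t n : Set ι), U i with hV
  have hVO : IsOpen V := isOpen_biUnion fun i _ => hU i
  have hle : μ (⋃ i, U i) ≤ μ V := by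
    have h1 : ∀ n : ℕ, μ (⋃ i, U i) ≤ μ V + ((n : ENNReal) + 1)⁻¹ := fun n =>
      (ht n).trans (by
        gcongr
        exact Set.biUnion_subset_biUnion_left (Set.subset_iUnion (fun n => (t n : Set ι)) n))
    refine ENNReal.le_of_forall_pos_le_add fun ε hε _ => ?_
    obtain ⟨n, hn⟩ := ENNReal.exists_inv_nat_lt (a := (ε : ENNReal)) (by simpa using hε.ne')
    refine (h1 n).trans ?_
    gcongr
    refine le_trans ?_ hn.le
    rw [ENNReal.inv_le_inv]
    exact le_self_add
  have hVU : V ⊆ ⋃ i, U i := by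
    intro ω h
    simp only [hV, Set.mem_iUnion] at h ⊢
    obtain ⟨i, _, h⟩ := h
    exact ⟨i, h⟩
  have h0 : μ ((⋃ i, U i) \ V) = 0 := by
    rw [measure_sdiff hVU hVO.measurableSet.nullMeasurableSet (measure_ne_top μ _)]
    exact tsub_eq_zero_of_le hle
  rw [measure_eq_zero_iff_ae_notMem] at h0
  filter_upwards [h0] with ω hω hex
  by_contra hcon
  apply hω
  refine ⟨by simpa using hex, fun h => hcon ?_⟩
  simp only [hV, Set.mem_iUnion₂] at h
  obtain ⟨i, hi, h⟩ := h
  exact ⟨i, hi, h⟩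

lemma aux_exists_gt {𝕜 X Y : Type*} [RCLike 𝕜]
    [NormedAddCommGroup X] [NormedSpace 𝕜 X] [NormedAddCommGroup Y] [NormedSpace 𝕜 Y]
    (T : X →L[𝕜] Y) (r : ℝ) (h : r < ‖T‖) :
    ∃ x : Metric.closedBall (0 : X) 1, r < ‖T x‖ := by
  obtain ⟨x, hx, h⟩ := T.exists_lt_apply_of_lt_opNorm h
  exact ⟨⟨x, by simpa using hx.le⟩, h⟩

/-- Corollary 2.6(1) of Blasco–van Neerven.
Let `μ` be a finite Radon measure on a topological space `Ω`. If `ω ↦ ‖Φ ω x‖` is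
lower semicontinuous for every `x ∈ X`, then `Φ` is strongly `μ`-normable. -/
theorem radon_lsc_strongly_normable
    {Ω : Type*} [TopologicalSpace Ω] [MeasurableSpace Ω] [BorelSpace Ω]
    {𝕜 X Y : Type*} [RCLike 𝕜]
    [NormedAddCommGroup X] [NormedSpace 𝕜 X] [CompleteSpace X]
    [NormedAddCommGroup Y] [NormedSpace 𝕜 Y] [CompleteSpace Y]
    (μ : Measure Ω) [IsFiniteMeasure μ] [μ.InnerRegular]
    (Φ : Ω → X →L[𝕜] Y)
    (hlsc : ∀ x : X, LowerSemicontinuous (fun ω => ‖Φ ω x‖)) :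
    ∀ ε : ℝ, 0 < ε → ∃ f : Ω → X, AEStronglyMeasurable f μ ∧
      ∀ᵐ ω ∂μ, ‖f ω‖ ≤ 1 ∧ ‖Φ ω‖ ≤ ‖Φ ω (f ω)‖ + ε := by
  intro ε hε
  have hnorm : LowerSemicontinuous (fun ω => ‖Φ ω‖) := by
    intro ω r hr
    obtain ⟨x, hx⟩ := aux_exists_gt (Φ ω) r hr
    filter_upwards [hlsc x ω r hx] with ω' h'
    refine h'.trans_le ((Φ ω').unit_le_opNorm x ?_)
    exact mem_closedBall_zero_iff.1 x.2
  have hopen : ∀ (r : ℝ) (x : Metric.closedBall (0 : X) 1), IsOpen {ω | r < ‖Φ ω x‖} :=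
    fun r x => (hlsc x).isOpen_preimage r
  choose C hC hCae using fun n : ℕ =>
    aux_countable_cover_s5 μ (fun x : Metric.closedBall (0 : X) 1 => {ω | (n : ℝ) * ε < ‖Φ ω x‖})
      (hopen _)
  let z : Metric.closedBall (0 : X) 1 := ⟨0, by simp⟩
  obtain ⟨x, hx⟩ := ((Set.countable_iUnion hC).insert z).exists_eq_range ⟨z, by simp⟩
  let good : Ω → ℕ → Prop := fun ω k => ‖Φ ω‖ ≤ ‖Φ ω (x k)‖ + ε
  have hgm : ∀ k, MeasurableSet {ω | good ω k} := fun k =>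
    measurableSet_le hnorm.measurable ((hlsc (x k)).measurable.add_const ε)
  let p : Ω → ℕ → Prop := fun ω k => good ω k ∨ ∀ j, ¬ good ω j
  have hp : ∀ ω, ∃ k, p ω k := by
    intro ω
    by_cases h : ∃ k, good ω k
    · exact h.imp fun k hk => Or.inl hk
    · exact ⟨0, Or.inr (not_exists.1 h)⟩
  have hpm : ∀ k, MeasurableSet {ω | p ω k} := by
    intro k
    have : {ω | p ω k} = {ω | good ω k} ∪ ⋂ j, {ω | good ω j}ᶜ := by
      ext ω; simp [p]
    rw [this]
    exact (hgm k).union (MeasurableSet.iInter fun j => (hgm j).compl)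
  classical
  have hfm := measurable_find hp hpm
  refine ⟨fun ω => (x (Nat.find (hp ω)) : X), ?_, ?_⟩
  · exact ((StronglyMeasurable.of_discrete (f := fun k : ℕ => (x k : X))).comp_measurable
      hfm).aestronglyMeasurable
  · filter_upwards [ae_all_iff.2 hCae] with ω hω
    refine ⟨mem_closedBall_zero_iff.1 (x (Nat.find (hp ω))).2, ?_⟩
    have hex : ∃ k, good ω k := by
      by_cases h : ‖Φ ω‖ ≤ ε
      · obtain ⟨k, hk⟩ : z ∈ Set.range x := by rw [← hx]; simp
        refine ⟨k, h.trans ?_⟩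
        simp
      · have hpos : 0 < ⌈‖Φ ω‖ / ε⌉₊ := Nat.ceil_pos.2 (div_pos (hε.trans (not_le.1 h)) hε)
        obtain ⟨n, hn⟩ := Nat.exists_eq_succ_of_ne_zero hpos.ne'
        have h1 : (n : ℝ) * ε < ‖Φ ω‖ := by
          rw [← lt_div_iff₀ hε]; exact Nat.lt_ceil.1 (by omega)
        have h2 : ‖Φ ω‖ ≤ ((n : ℝ) + 1) * ε := by
          rw [← div_le_iff₀ hε]
          have := Nat.le_ceil (‖Φ ω‖ / ε)
          rw [hn] at this
          exact_mod_cast this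
        obtain ⟨y, hy, hy'⟩ := hω n (aux_exists_gt (Φ ω) _ h1)
        obtain ⟨k, hk⟩ : y ∈ Set.range x := by
          rw [← hx]; exact Or.inr (Set.mem_iUnion.2 ⟨n, hy⟩)
        refine ⟨k, ?_⟩
        have hy2 : (n : ℝ) * ε < ‖Φ ω y‖ := hy'
        simp only [good, hk]
        linarith
    rcases Nat.find_spec (hp ω) with h | h
    · exact h
    · obtain ⟨k, hk⟩ := hex
      exact absurd hk (h k)
end

section
/- Let (Ω, Σ, μ) be a finite measure space, X, Y Banach spaces, 1 < p < ∞ and 1/p + 1/p' = 1. Let Φ: Ω → L(X,Y) be such that ω ↦ Φ(ω)x is strongly μ-measurable for every x ∈ X, and suppose C := sup { ∫_Ω ‖Φ(ω)f(ω)‖ dμ(ω) : f: Ω → X strongly μ-measurable with (∫_Ω ‖f‖^{p'} dμ)^{1/p'} ≤ 1 } < ∞. Define F(A) ∈ L(X,Y) for A ∈ Σ by F(A)x := ∫_A Φ(ω)x dμ(ω). Then for every finite partition π of Ω into pairwise disjoint sets of Σ with strictly positive μ-measure one has Σ_{A∈π} ‖F(A)‖^p / μ(A)^{p-1} ≤ C^p;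 that is, F has V^p(μ; L(X,Y))-norm at most C. -/
open MeasureTheory

theorem key_aux
    {Ω : Type*} [MeasurableSpace Ω] {𝕜 X Y : Type*} [RCLike 𝕜]
    [NormedAddCommGroup X] [NormedSpace 𝕜 X]
    [NormedAddCommGroup Y] [NormedSpace 𝕜 Y] [NormedSpace ℝ Y]
    (μ : Measure Ω) [IsFiniteMeasure μ]
    (p' : ℝ) (hp' : 0 < p')
    (Φ : Ω → X →L[𝕜] Y)
    (C : ℝ)
    (hC : ∀ f : Ω → X, AEStronglyMeasurable f μ →
      eLpNorm f (ENNReal.ofReal p') μ ≤ 1 →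
      Integrable (fun ω => Φ ω (f ω)) μ ∧ ∫ ω, ‖Φ ω (f ω)‖ ∂μ ≤ C)
    (F : Set Ω → X →L[𝕜] Y)
    (hF : ∀ A : Set Ω, MeasurableSet A → ∀ x : X, F A x = ∫ ω in A, Φ ω x ∂μ)
    (π : Finset (Set Ω))
    (hπmeas : ∀ A ∈ π, MeasurableSet A)
    (hπdisj : (π : Set (Set Ω)).PairwiseDisjoint id)
    (hπcover : (⋃ A ∈ π, A) = Set.univ) (z : Set Ω → X)
    (hz : ∑ A ∈ π, ‖z A‖ ^ p' * (μ A).toReal ≤ 1) :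
    ∑ A ∈ π, ‖F A (z A)‖ ≤ C := by
  classical
  set f : Ω → X := fun ω => ∑ A ∈ π, A.indicator (fun _ => z A) ω with hf
  have hfA : ∀ A ∈ π, ∀ ω ∈ A, f ω = z A := by
    intro A hA ω hω
    simp only [hf]
    rw [Finset.sum_eq_single A]
    · simp [hω]
    · intro B hB hBA
      have := hπdisj hB hA hBA
      have h2 : ω ∉ B := fun h => Set.disjoint_left.1 this h hω
      simp [h2]
    · intro h; exact absurd hA h
  have hfm : AEStronglyMeasurable f μ := by
    apply StronglyMeasurable.aestronglyMeasurable
    apply Finset.stronglyMeasurable_fun_sum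
    intro A hA
    exact stronglyMeasurable_const.indicator (hπmeas A hA)
  have hfn : eLpNorm f (ENNReal.ofReal p') μ ≤ 1 := by
    rw [eLpNorm_eq_lintegral_rpow_enorm_toReal (by simpa using hp') ENNReal.ofReal_ne_top,
      ENNReal.toReal_ofReal hp'.le]
    apply ENNReal.rpow_le_one _ (by positivity)
    rw [← setLIntegral_univ, ← hπcover, lintegral_biUnion_finset (t := fun A : Set Ω => A) hπdisj hπmeas]
    have : ∀ A ∈ π, ∫⁻ ω in A, ‖f ω‖ₑ ^ p' ∂μ = ENNReal.ofReal (‖z A‖ ^ p' * (μ A).toReal) := by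
      intro A hA
      rw [setLIntegral_congr_fun (g := fun _ => ‖z A‖ₑ ^ p') (hπmeas A hA)
        (fun ω hω => by simp only [hfA A hA ω hω])]
      rw [setLIntegral_const, ENNReal.ofReal_mul (by positivity),
        ENNReal.ofReal_toReal (measure_ne_top _ _),
        ← ENNReal.ofReal_rpow_of_nonneg (norm_nonneg _) hp'.le, ofReal_norm_eq_enorm]
    rw [Finset.sum_congr rfl this, ← ENNReal.ofReal_sum_of_nonneg (fun _ _ => by positivity)]
    simpa using ENNReal.ofReal_le_ofReal hz
  obtain ⟨hi, hle⟩ := hC f hfm hfn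
  refine le_trans ?_ hle
  rw [← setIntegral_univ, ← hπcover, integral_biUnion_finset π hπmeas hπdisj
    (fun A _ => hi.norm.integrableOn)]
  apply Finset.sum_le_sum
  intro A hA
  rw [hF A (hπmeas A hA), setIntegral_congr_fun (g := fun ω => ‖Φ ω (z A)‖) (hπmeas A hA)
        (fun ω hω => by simp only [hfA A hA ω hω])]
  exact norm_integral_le_integral_norm _

/-- Theorem 3.5 of Blasco–van Neerven.
If the `L^p[μ; L(X,Y)]`-norm of `Φ` is at most `C < ∞` (i.e. `Φ f ∈ L^1(μ;Y)` with
`∫ ‖Φ f‖ dμ ≤ C` for every strongly `μ`-measurable `f` with `‖f‖_{L^{p'}} ≤ 1`),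
then the vector measure `F A x = ∫_A Φ ω x dμ` satisfies
`∑_{A∈π} ‖F A‖^p / μ(A)^{p-1} ≤ C^p` for every finite partition `π` of `Ω` into
measurable sets of positive measure; that is, `‖F‖_{V^p} ≤ C`. -/
theorem p_variation_bound_of_bracket_norm
    {Ω : Type*} [MeasurableSpace Ω] {𝕜 X Y : Type*} [RCLike 𝕜]
    [NormedAddCommGroup X] [NormedSpace 𝕜 X] [CompleteSpace X]
    [NormedAddCommGroup Y] [NormedSpace 𝕜 Y] [NormedSpace ℝ Y] [CompleteSpace Y]
    (μ : Measure Ω) [IsFiniteMeasure μ]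
    (p p' : ℝ) (hp : 1 < p) (hpp' : 1 / p + 1 / p' = 1)
    (Φ : Ω → X →L[𝕜] Y)
    (horb : ∀ x : X, AEStronglyMeasurable (fun ω => Φ ω x) μ)
    (C : ℝ)
    (hC : ∀ f : Ω → X, AEStronglyMeasurable f μ →
      eLpNorm f (ENNReal.ofReal p') μ ≤ 1 →
      Integrable (fun ω => Φ ω (f ω)) μ ∧ ∫ ω, ‖Φ ω (f ω)‖ ∂μ ≤ C)
    (F : Set Ω → X →L[𝕜] Y)
    (hF : ∀ A : Set Ω, MeasurableSet A → ∀ x : X, F A x = ∫ ω in A, Φ ω x ∂μ)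
    (π : Finset (Set Ω))
    (hπmeas : ∀ A ∈ π, MeasurableSet A)
    (hπpos : ∀ A ∈ π, 0 < μ A)
    (hπdisj : (π : Set (Set Ω)).PairwiseDisjoint id)
    (hπcover : (⋃ A ∈ π, A) = Set.univ) :
    ∑ A ∈ π, ‖F A‖ ^ p / (μ A).toReal ^ (p - 1) ≤ C ^ p := by
  classical
  have hc : p.HolderConjugate p' := by
    rw [Real.holderConjugate_iff]
    exact ⟨hp, by simpa using hpp'⟩
  have hp0 : 0 < p := hc.pos
  have hq0 : 0 < p' := hc.symm.pos
  have hm : ∀ A ∈ π, 0 < (μ A).toReal := fun A hA =>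
    ENNReal.toReal_pos (hπpos A hA).ne' (measure_ne_top _ _)
  have hC0 : 0 ≤ C := by
    have := (hC (fun _ => 0) aestronglyMeasurable_const (by simp)).2
    simpa using this
  have key := key_aux μ p' hq0 Φ C hC F hF π hπmeas hπdisj hπcover
  have key2 : ∀ b : Set Ω → ℝ, (∀ A, 0 ≤ b A) → ∑ A ∈ π, b A ^ p' * (μ A).toReal ≤ 1 →
      ∑ A ∈ π, b A * ‖F A‖ ≤ C := by
    intro b hb hb1
    have ht : ∀ t : ℝ, 0 ≤ t → t < 1 → t * ∑ A ∈ π, b A * ‖F A‖ ≤ C := by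
      intro t ht0 ht1
      have hx : ∀ A, ∃ x : X, ‖x‖ ≤ 1 ∧ t * ‖F A‖ ≤ ‖F A x‖ := by
        intro A
        rcases (norm_nonneg (F A)).eq_or_lt with h | h
        · exact ⟨0, by simp, by simp [← h]⟩
        · obtain ⟨x, hx1, hx2⟩ := (F A).exists_lt_apply_of_lt_opNorm
            (show t * ‖F A‖ < ‖F A‖ by nlinarith)
          exact ⟨x, hx1.le, hx2.le⟩
      choose x hx1 hx2 using hx
      refine le_trans ?_ (key (fun A => (b A : 𝕜) • x A) (le_trans ?_ hb1))
      · rw [Finset.mul_sum]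
        apply Finset.sum_le_sum
        intro A _
        rw [map_smul, norm_smul, RCLike.norm_ofReal, abs_of_nonneg (hb A)]
        nlinarith [mul_le_mul_of_nonneg_left (hx2 A) (hb A)]
      · apply Finset.sum_le_sum
        intro A _
        have : ‖(b A : 𝕜) • x A‖ ≤ b A := by
          rw [norm_smul, RCLike.norm_ofReal, abs_of_nonneg (hb A)]
          exact mul_le_of_le_one_right (hb A) (hx1 A)
        gcongr
    by_contra! h
    have hS : 0 < ∑ A ∈ π, b A * ‖F A‖ := hC0.trans_lt h
    obtain ⟨t, h1, h2⟩ := exists_between ((div_lt_one hS).2 h)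
    have := ht t ((div_nonneg hC0 hS.le).trans h1.le) h2
    rw [div_lt_iff₀ hS] at h1
    linarith
  obtain ⟨⟨g, hg1, hg2⟩, -⟩ := NNReal.isGreatest_Lp π
    (fun A => ‖F A‖₊ * (μ A).toNNReal ^ (-(1/p'))) hc
  have hg1' : ∑ A ∈ π, (g A : ℝ) ^ p' ≤ 1 := by exact_mod_cast hg1
  have e : ∀ A, ((μ A).toNNReal : ℝ) = (μ A).toReal := fun A => rfl
  have hg2' := congrArg (fun r : NNReal => (r : ℝ)) hg2
  simp only [NNReal.coe_sum, NNReal.coe_mul, NNReal.coe_rpow, coe_nnnorm, e] at hg2'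
  have k := key2 (fun A => g A * (μ A).toReal ^ (-(1/p'))) (fun A => by positivity) (by
    refine le_trans (Finset.sum_le_sum fun A hA => le_of_eq ?_) hg1'
    have := hm A hA
    rw [Real.mul_rpow (by positivity) (by positivity), ← Real.rpow_mul this.le,
      show -(1/p') * p' = -1 by field_simp, Real.rpow_neg_one]
    field_simp)
  have hS : ∑ A ∈ π, (‖F A‖ * (μ A).toReal ^ (-(1/p'))) ^ p
      = ∑ A ∈ π, ‖F A‖ ^ p / (μ A).toReal ^ (p - 1) := by
    refine Finset.sum_congr rfl fun A hA => ?_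
    have := hm A hA
    rw [Real.mul_rpow (by positivity) (by positivity), ← Real.rpow_mul this.le,
      show -(1/p') * p = -(p - 1) by
        have : 1 / p' = 1 - 1 / p := by linarith
        rw [this]; field_simp, Real.rpow_neg this.le]
    rfl
  rw [hS] at hg2'
  have hS0 : 0 ≤ ∑ A ∈ π, ‖F A‖ ^ p / (μ A).toReal ^ (p - 1) :=
    Finset.sum_nonneg fun _ _ => by positivity
  have h3 : (∑ A ∈ π, ‖F A‖ ^ p / (μ A).toReal ^ (p - 1)) ^ (1 / p) ≤ C := by
    rw [← hg2']
    refine le_trans (Finset.sum_le_sum fun A hA => le_of_eq ?_) k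
    ring
  have h4 := Real.rpow_le_rpow (by positivity) h3 hp0.le
  rwa [← Real.rpow_mul hS0, one_div, inv_mul_cancel₀ hp0.ne', Real.rpow_one] at h4
end

section
/- Let (Ω, Σ, μ) be a finite measure space, X a separable Banach space, Y a Banach space. Let Φ: Ω → L(X,Y) be such that ω ↦ Φ(ω)x is strongly μ-measurable for every x ∈ X and C := sup { ∫_Ω ‖Φ(ω)f(ω)‖ dμ : f: Ω → X strongly μ-measurable with ‖f(ω)‖ ≤ 1 μ-a.e. } < ∞ (the L^1[μ;L(X,Y)]-norm of Φ). Define F(A) ∈ L(X,Y) for A ∈ Σ by F(A)x := ∫_A Φ(ω)x dμ(ω). Then: (i) F is countably additive in the operator norm, i.e., for every sequence (A_n)_{n≥1} of pairwise disjoint sets in Σ, F(⋃_{n≥1} A_n) = Σ_{n≥1} F(A_n) with convergence in L(X,Y); and (ii) for every finite partition π of Ω into pairwise disjoint sets of Σ with strictly positive μ-measure, Σ_{A∈π} ‖F(A)‖ ≤ C; that is, F has variation at most C. -/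
open MeasureTheory Filter

theorem aux_sum_le
    {Ω : Type*} [MeasurableSpace Ω] {𝕜 X Y : Type*} [RCLike 𝕜]
    [NormedAddCommGroup X] [NormedSpace 𝕜 X]
    [NormedAddCommGroup Y] [NormedSpace 𝕜 Y] [NormedSpace ℝ Y]
    (μ : Measure Ω)
    (Φ : Ω → X →L[𝕜] Y)
    (C : ℝ)
    (hC : ∀ f : Ω → X, AEStronglyMeasurable f μ → (∀ᵐ ω ∂μ, ‖f ω‖ ≤ 1) →
      Integrable (fun ω => Φ ω (f ω)) μ ∧ ∫ ω, ‖Φ ω (f ω)‖ ∂μ ≤ C)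
    (F : Set Ω → X →L[𝕜] Y)
    (hF : ∀ A : Set Ω, MeasurableSet A → ∀ x : X, F A x = ∫ ω in A, Φ ω x ∂μ)
    {ι : Type*} (s : Finset ι) (A : ι → Set Ω) (hA : ∀ i ∈ s, MeasurableSet (A i))
    (hd : (s : Set ι).PairwiseDisjoint A) : ∑ i ∈ s, ‖F (A i)‖ ≤ C := by
  refine le_of_forall_pos_le_add fun ε hε => ?_
  have hδ : 0 < ε / (s.card + 1) := by positivity
  have hx : ∀ i, ∃ x : X, ‖x‖ < 1 ∧ ‖F (A i)‖ - ε / (s.card + 1) < ‖F (A i) x‖ := fun i =>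
    (F (A i)).exists_lt_apply_of_lt_opNorm (by linarith)
  choose x hx1 hx2 using hx
  set f : Ω → X := fun ω => ∑ i ∈ s, (A i).indicator (fun _ => x i) ω with hf
  have hfA : ∀ i ∈ s, ∀ ω ∈ A i, f ω = x i := by
    intro i hi ω hω
    simp only [hf]
    rw [Finset.sum_eq_single_of_mem i hi]
    · simp [hω]
    · intro j hj hji
      have : ω ∉ A j := fun h => Set.disjoint_left.1 (hd hj hi hji) h hω
      simp [this]
  have hfm : AEStronglyMeasurable f μ := by
    refine StronglyMeasurable.aestronglyMeasurable ?_
    refine Finset.stronglyMeasurable_fun_sum s fun i hi => ?_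
    exact stronglyMeasurable_const.indicator (hA i hi)
  have hfn : ∀ ω, ‖f ω‖ ≤ 1 := by
    intro ω
    by_cases h : ∃ i ∈ s, ω ∈ A i
    · obtain ⟨i, hi, hω⟩ := h
      rw [hfA i hi ω hω]
      exact (hx1 i).le
    · push Not at h
      have : f ω = 0 := Finset.sum_eq_zero fun i hi => by simp [h i hi]
      simp [this]
  obtain ⟨hint, hle⟩ := hC f hfm (Eventually.of_forall hfn)
  have h1 : ∀ i ∈ s, ‖F (A i)‖ ≤ (∫ ω in A i, ‖Φ ω (f ω)‖ ∂μ) + ε / (s.card + 1) := by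
    intro i hi
    have h2 : ‖F (A i) (x i)‖ ≤ ∫ ω in A i, ‖Φ ω (f ω)‖ ∂μ := by
      rw [hF _ (hA i hi), setIntegral_congr_fun (g := fun ω => Φ ω (f ω)) (hA i hi)]
      · exact norm_integral_le_integral_norm _
      · intro ω hω
        simp only [hfA i hi ω hω]
    linarith [hx2 i]
  calc ∑ i ∈ s, ‖F (A i)‖
      ≤ ∑ i ∈ s, ((∫ ω in A i, ‖Φ ω (f ω)‖ ∂μ) + ε / (s.card + 1)) := Finset.sum_le_sum h1
    _ = (∫ ω in ⋃ i ∈ s, A i, ‖Φ ω (f ω)‖ ∂μ) + s.card * (ε / (s.card + 1)) := by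
        rw [integral_biUnion_finset s hA hd (fun i _ => hint.norm.integrableOn),
          Finset.sum_add_distrib]
        simp
    _ ≤ C + ε := by
        refine add_le_add ((setIntegral_le_integral hint.norm
          (Eventually.of_forall fun _ => norm_nonneg _)).trans hle) ?_
        rw [mul_div_assoc', div_le_iff₀ (by positivity)]
        nlinarith

/-- Theorem 3.8 of Blasco–van Neerven.
Let `X` be separable and suppose `Φ` has strongly `μ`-measurable orbits and
`L^1[μ;L(X,Y)]`-norm at most `C < ∞` (i.e. `Φ f ∈ L^1(μ;Y)` with `∫ ‖Φ f‖ dμ ≤ C`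
for every strongly `μ`-measurable `f` with `‖f ω‖ ≤ 1` a.e.). Then the vector
measure `F A x = ∫_A Φ ω x dμ` is countably additive in the operator norm, and has
variation at most `C`: `∑_{A∈π} ‖F A‖ ≤ C` for every finite partition `π` of `Ω`
into measurable sets of positive measure. -/
theorem countably_additive_and_variation_bound_of_L1_bracket
    {Ω : Type*} [MeasurableSpace Ω] {𝕜 X Y : Type*} [RCLike 𝕜]
    [NormedAddCommGroup X] [NormedSpace 𝕜 X] [CompleteSpace X]
    [TopologicalSpace.SeparableSpace X]
    [NormedAddCommGroup Y] [NormedSpace 𝕜 Y] [NormedSpace ℝ Y] [CompleteSpace Y]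
    (μ : Measure Ω) [IsFiniteMeasure μ]
    (Φ : Ω → X →L[𝕜] Y)
    (horb : ∀ x : X, AEStronglyMeasurable (fun ω => Φ ω x) μ)
    (C : ℝ)
    (hC : ∀ f : Ω → X, AEStronglyMeasurable f μ → (∀ᵐ ω ∂μ, ‖f ω‖ ≤ 1) →
      Integrable (fun ω => Φ ω (f ω)) μ ∧ ∫ ω, ‖Φ ω (f ω)‖ ∂μ ≤ C)
    (F : Set Ω → X →L[𝕜] Y)
    (hF : ∀ A : Set Ω, MeasurableSet A → ∀ x : X, F A x = ∫ ω in A, Φ ω x ∂μ) :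
    (∀ A : ℕ → Set Ω, (∀ n, MeasurableSet (A n)) →
      Pairwise (Function.onFun Disjoint A) →
      Tendsto (fun N : ℕ => ∑ n ∈ Finset.range N, F (A n)) atTop
        (nhds (F (⋃ n, A n)))) ∧
    (∀ π : Finset (Set Ω), (∀ A ∈ π, MeasurableSet A) → (∀ A ∈ π, 0 < μ A) →
      (π : Set (Set Ω)).PairwiseDisjoint id → (⋃ A ∈ π, A) = Set.univ →
      ∑ A ∈ π, ‖F A‖ ≤ C) := by
  have horbi : ∀ x : X, Integrable (fun ω => Φ ω x) μ := by
    intro x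
    have hp : (0 : ℝ) < ‖x‖ + 1 := by positivity
    have hc : ((‖x‖ + 1 : ℝ) : 𝕜) ≠ 0 := by exact_mod_cast hp.ne'
    have h := (hC (fun _ => ((‖x‖ + 1 : ℝ) : 𝕜)⁻¹ • x) aestronglyMeasurable_const
      (Eventually.of_forall fun _ => by
        rw [norm_smul, norm_inv, RCLike.norm_ofReal, abs_of_pos hp, inv_mul_le_iff₀ hp]
        linarith)).1
    have h' := h.smul ((‖x‖ + 1 : ℝ) : 𝕜)
    refine h'.congr (Eventually.of_forall fun ω => ?_)
    simp only [Pi.smul_apply, map_smul]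
    rw [smul_inv_smul₀ hc]
  refine ⟨fun A hA hd => ?_, fun π hπ _ hd _ =>
    aux_sum_le μ Φ C hC F hF π id hπ hd⟩
  have hs : Summable fun n => ‖F (A n)‖ :=
    summable_of_sum_le (fun _ => norm_nonneg _) fun s =>
      aux_sum_le μ Φ C hC F hF s A (fun i _ => hA i) (fun i _ j _ h => hd h)
  have hs' : Summable fun n => F (A n) := hs.of_norm
  have ht := hs'.hasSum
  have he : ∑' n, F (A n) = F (⋃ n, A n) := by
    ext x
    have h1 : HasSum (fun n => F (A n) x) ((∑' n, F (A n)) x) :=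
      ht.mapL (ContinuousLinearMap.apply 𝕜 Y x)
    have h2 := hasSum_integral_iUnion hA hd (horbi x).integrableOn
    rw [← hF _ (MeasurableSet.iUnion hA)] at h2
    simp only [← hF _ (hA _)] at h2
    exact h1.unique h2
  rw [← he]
  exact ht.tendsto_sum_nat
end
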